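/- arXiv:1709.08265 — 2 statements merged into one kernel-verified Lean document; each statement's English description precedes it below -/
import Mathlib

section
/- Let C be an ℓ-controllable group system. Then for every s ∈ ℤ, C^{s+} = C^{[s,s+ℓ]}·C^{(s+1)+}; that is, every codeword vanishing before time s factors as the product of a codeword supported on [s, s+ℓ] and a codeword vanishing before time s+1. -/
open scoped Pointwise

namespace GroupSystemPaper

variable {A : ℤ → Type*} [∀ t, Group (A t)]

/-- `C^{t+}` : codewords of the group system `C` that are the identity before time `t`. -/
def Cplus (C : Subgroup (∀ t, A t)) (t : ℤ) : Subgroup C where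
  carrier := {a | ∀ n < t, (a : ∀ s, A s) n = 1}
  one_mem' := by intro n hn; simp
  mul_mem' := by intro a b ha hb n hn; simp [ha n hn, hb n hn]
  inv_mem' := by intro a ha n hn; simp [ha n hn]

/-- `C^{t−}` : codewords of the group system `C` that are the identity from time `t` on. -/
def Cminus (C : Subgroup (∀ t, A t)) (t : ℤ) : Subgroup C where
  carrier := {a | ∀ n, t ≤ n → (a : ∀ s, A s) n = 1}
  one_mem' := by intro n hn; simp
  mul_mem' := by intro a b ha hb n hn; simp [ha n hn, hb n hn]
  inv_mem' := by intro a ha n hn; simp [ha n hn]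

/-- `C^{[t₁,t₂]}` : codewords supported on the interval `[t₁, t₂]`. -/
def Cint (C : Subgroup (∀ t, A t)) (t₁ t₂ : ℤ) : Subgroup C :=
  Cplus C t₁ ⊓ Cminus C (t₂ + 1)

instance Cplus_normal (C : Subgroup (∀ t, A t)) (t : ℤ) : (Cplus C t).Normal := by
  constructor
  intro x hx g n hn
  have h1 : (x : ∀ s, A s) n = 1 := hx n hn
  simp [h1]

instance Cminus_normal (C : Subgroup (∀ t, A t)) (t : ℤ) : (Cminus C t).Normal := by
  constructor
  intro x hx g n hn
  have h1 : (x : ∀ s, A s) n = 1 := hx n hn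
  simp [h1]

instance Cint_normal (C : Subgroup (∀ t, A t)) (t₁ t₂ : ℤ) : (Cint C t₁ t₂).Normal := by
  constructor
  intro x hx g
  rcases Subgroup.mem_inf.mp hx with ⟨h1, h2⟩
  exact Subgroup.mem_inf.mpr
    ⟨(Cplus_normal C t₁).conj_mem _ h1 g, (Cminus_normal C (t₂ + 1)).conj_mem _ h2 g⟩

/-- The normal subgroup `C^{t−}C^{t+}` of `C`. -/
def stateN (C : Subgroup (∀ t, A t)) (t : ℤ) : Subgroup C :=
  Cminus C t ⊔ Cplus C t

instance stateN_normal (C : Subgroup (∀ t, A t)) (t : ℤ) : (stateN C t).Normal :=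
  Subgroup.sup_normal _ _

/-- The canonical state space `Σ^t = C/(C^{t−}C^{t+})`. -/
abbrev State (C : Subgroup (∀ t, A t)) (t : ℤ) : Type _ :=
  ↥C ⧸ stateN C t

/-- The state projection `σ^t : C → Σ^t`. -/
def sigma (C : Subgroup (∀ t, A t)) (t : ℤ) : ↥C →* State C t :=
  QuotientGroup.mk' (stateN C t)

/-- The evaluation homomorphism `χ^t : C → A^t`. -/
def evalHom (C : Subgroup (∀ t, A t)) (t : ℤ) : ↥C →* A t :=
  (Pi.evalMonoidHom A t).comp C.subtype

/-- The branch homomorphism `β^t : C → Σ^t × A^t × Σ^{t+1}`. -/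
def beta (C : Subgroup (∀ t, A t)) (t : ℤ) :
    ↥C →* State C t × A t × State C (t + 1) :=
  (sigma C t).prod ((evalHom C t).prod (sigma C (t + 1)))

/-- The branch group `B^t = β^t(C)`. -/
def Branch (C : Subgroup (∀ t, A t)) (t : ℤ) :
    Subgroup (State C t × A t × State C (t + 1)) :=
  (beta C t).range

/-- `β^t` with codomain restricted to the branch group `B^t`. -/
def betaRes (C : Subgroup (∀ t, A t)) (t : ℤ) : ↥C →* ↥(Branch C t) :=
  (beta C t).rangeRestrict

/-- `X_j^t = β^t(C^{(t−j)+})` as a subgroup of the branch group `B^t`. -/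
def X (C : Subgroup (∀ t, A t)) (j t : ℤ) : Subgroup ↥(Branch C t) :=
  (Cplus C (t - j)).map (betaRes C t)

/-- `Y_i^t = β^t(C^{(t+i+1)−})` as a subgroup of the branch group `B^t`. -/
def Y (C : Subgroup (∀ t, A t)) (i t : ℤ) : Subgroup ↥(Branch C t) :=
  (Cminus C (t + i + 1)).map (betaRes C t)

instance X_normal (C : Subgroup (∀ t, A t)) (j t : ℤ) : (X C j t).Normal :=
  (Cplus_normal C (t - j)).map _ (MonoidHom.rangeRestrict_surjective _)

instance Y_normal (C : Subgroup (∀ t, A t)) (i t : ℤ) : (Y C i t).Normal :=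
  (Cminus_normal C (t + i + 1)).map _ (MonoidHom.rangeRestrict_surjective _)

/-- `Δ_k^t = X_0^t ∩ Y_k^t`. -/
def Del (C : Subgroup (∀ t, A t)) (k t : ℤ) : Subgroup ↥(Branch C t) :=
  X C 0 t ⊓ Y C k t

/-- `D_k^t = {a ∈ C : β^t(a) ∈ Δ_k^t}`. -/
def D (C : Subgroup (∀ t, A t)) (k t : ℤ) : Subgroup ↥C :=
  (Del C k t).comap (betaRes C t)

/-- Following-branch operator: for `S ⊆ B^{t₁}`,
`FSet C t₁ t₂ S = {β^{t₂}(a) : a ∈ C, β^{t₁}(a) ∈ S}`. -/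
def FSet (C : Subgroup (∀ t, A t)) (t₁ t₂ : ℤ) (S : Set ↥(Branch C t₁)) :
    Set ↥(Branch C t₂) :=
  {x | ∃ a : ↥C, betaRes C t₁ a ∈ S ∧ betaRes C t₂ a = x}

/-- `π^{[t,t+k]} : C → B^t × ⋯ × B^{t+k}`, `a ↦ (β^t(a), …, β^{t+k}(a))`. -/
def piSeg (C : Subgroup (∀ t, A t)) (t : ℤ) (k : ℕ) :
    ↥C →* ∀ j : Fin (k + 1), ↥(Branch C (t + ((j : ℕ) : ℤ))) where
  toFun a := fun j => betaRes C (t + ((j : ℕ) : ℤ)) a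
  map_one' := by funext j; simp
  map_mul' a b := by funext j; simp

/-- `π^{[t,t+k]}(D_m^t)`. -/
def Pseg (C : Subgroup (∀ t, A t)) (t : ℤ) (k : ℕ) (m : ℤ) :
    Subgroup (∀ j : Fin (k + 1), ↥(Branch C (t + ((j : ℕ) : ℤ)))) :=
  (D C m t).map (piSeg C t k)

/-- `β^{t+j}(D_m^t)` : the image of `D_m^t` in the branch group at time `t + j`. -/
def Qb (C : Subgroup (∀ t, A t)) (t m j : ℤ) : Subgroup ↥(Branch C (t + j)) :=
  (D C m t).map (betaRes C (t + j))

/-- The normal subgroup `C^{[t,t+k−1]}C^{[t+1,t+k]}` of `C` (denominator of the granule). -/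
def granN (C : Subgroup (∀ t, A t)) (t : ℤ) (k : ℕ) : Subgroup ↥C :=
  Cint C t (t + k - 1) ⊔ Cint C (t + 1) (t + k)

instance granN_normal (C : Subgroup (∀ t, A t)) (t : ℤ) (k : ℕ) : (granN C t k).Normal :=
  Subgroup.sup_normal _ _

lemma mem_D_of_mem_Cint (C : Subgroup (∀ t, A t)) (t : ℤ) (k : ℕ) {a : ↥C}
    (ha : a ∈ Cint C t (t + k)) : a ∈ D C (k : ℤ) t := by
  rcases Subgroup.mem_inf.mp ha with ⟨h1, h2⟩
  refine Subgroup.mem_comap.mpr (Subgroup.mem_inf.mpr ⟨?_, ?_⟩)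
  · exact Subgroup.mem_map.mpr ⟨a, by simpa using h1, rfl⟩
  · exact Subgroup.mem_map.mpr ⟨a, h2, rfl⟩

/-- `ℓ`-controllability of the group system `C`. -/
def Controllable (C : Subgroup (∀ t, A t)) (ℓ : ℕ) : Prop :=
  ∀ a b : ↥C, ∀ t : ℤ, ∃ c : ↥C,
    (∀ n < t, (c : ∀ s, A s) n = (a : ∀ s, A s) n) ∧
    (∀ n, t + (ℓ : ℤ) ≤ n → (c : ∀ s, A s) n = (b : ∀ s, A s) n)


lemma Cplus_antitone (C : Subgroup (∀ t, A t)) : Antitone (Cplus C) :=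
  fun _ _ hst _ ha n hn => ha n (hn.trans_le hst)

lemma Controllable.Cminus_mul_Cplus {C : Subgroup (∀ t, A t)} {ℓ : ℕ} (h : Controllable C ℓ)
    (t : ℤ) : (Cminus C (t + ℓ) : Set C) * (Cplus C t : Set C) = Set.univ := by
  refine Set.eq_univ_of_forall fun a => ?_
  obtain ⟨c, hc_past, hc_future⟩ := h a 1 t
  have hc : c ∈ Cminus C (t + ℓ) := hc_future
  have hca : c⁻¹ * a ∈ Cplus C t := fun n hn => by simp [hc_past n hn]
  exact ⟨c, hc, c⁻¹ * a, hca, mul_inv_cancel_left c a⟩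

theorem statement3_general {C : Subgroup (∀ t, A t)} {ℓ : ℕ} (h : Controllable C ℓ)
    {s t : ℤ} (hst : s ≤ t) :
    (Cplus C s : Set C) = (Cint C s (t + ℓ) : Set C) * (Cplus C (t + 1) : Set C) := by
  have hle : Cplus C (t + 1) ≤ Cplus C s := Cplus_antitone C (by lia)
  calc (Cplus C s : Set C)
      = (Cplus C s : Set C) ∩ ((Cminus C (t + 1 + ℓ) : Set C) * (Cplus C (t + 1) : Set C)) := by
        rw [h.Cminus_mul_Cplus, Set.inter_univ]
    -- Dedekind's modular law
    _ = ((Cplus C s ⊓ Cminus C (t + 1 + ℓ) : Subgroup C) : Set C) * (Cplus C (t + 1) : Set C) :=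
        (Subgroup.inf_mul_assoc _ _ _ hle).symm
    _ = (Cint C s (t + ℓ) : Set C) * (Cplus C (t + 1) : Set C) := by
        rw [Cint, add_right_comm]

/-- If `C` is `ℓ`-controllable then for every `s ∈ ℤ`,
`C^{s+} = C^{[s,s+ℓ]}·C^{(s+1)+}`. -/
theorem statement3 (C : Subgroup (∀ t, A t)) (ℓ : ℕ) (h : Controllable C ℓ) (s : ℤ) :
    (Cplus C s : Set ↥C) =
      (Cint C s (s + (ℓ : ℤ)) : Set ↥C) * (Cplus C (s + 1) : Set ↥C) :=
  statement3_general h le_rfl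

end GroupSystemPaper
end

section
/- Let C be a group system. For every t ∈ ℤ, the kernel of the branch homomorphism β^t equals the set product C^{t−}·C^{(t+1)+}; consequently the branch group B^t is isomorphic to the quotient group C/(C^{t−}C^{(t+1)+}). -/
open scoped Pointwise

namespace GroupSystemPaper

variable {A : ℤ → Type*} [∀ t, Group (A t)]

lemma sup_inf_assoc_of_le_of_normal {G : Type*} [Group G] {H K : Subgroup G} (N : Subgroup G)
    [N.Normal] (hHK : H ≤ K) : (H ⊔ N) ⊓ K = H ⊔ N ⊓ K := by
  refine le_antisymm ?_ (le_inf (sup_le_sup_left inf_le_left H) (sup_le hHK inf_le_right))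
  rintro _ ⟨hsup, hmem⟩
  obtain ⟨h, hh, n, hn, rfl⟩ := Subgroup.mem_sup_of_normal_right.mp hsup
  exact Subgroup.mul_mem_sup hh ⟨hn, (K.mul_mem_cancel_left (hHK hh)).mp hmem⟩

section

variable (C : Subgroup (∀ t, A t))

lemma Cminus_mono : Monotone (Cminus C) :=
  fun _ _ hst _ ha n hn => ha n (hst.trans hn)

lemma Cminus_le_ker_evalHom {s t : ℤ} (hst : s ≤ t) : Cminus C s ≤ (evalHom C t).ker :=
  fun _ ha => ha t hst

lemma Cplus_inf_ker_evalHom (t : ℤ) :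
    Cplus C t ⊓ (evalHom C t).ker = Cplus C (t + 1) := by
  ext a
  refine ⟨fun ⟨hlt, ht⟩ n hn => ?_, fun ha => ⟨fun n hn => ha n (by lia), ha t (by lia)⟩⟩
  rcases (Int.lt_add_one_iff.mp hn).lt_or_eq with h | rfl
  · exact hlt n h
  · exact ht

lemma stateN_inf_ker_evalHom (t : ℤ) :
    stateN C t ⊓ (evalHom C t).ker = Cminus C t ⊔ Cplus C (t + 1) := by
  rw [stateN, sup_inf_assoc_of_le_of_normal _ (Cminus_le_ker_evalHom C le_rfl),
    Cplus_inf_ker_evalHom]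

lemma ker_sigma (t : ℤ) : (sigma C t).ker = stateN C t :=
  QuotientGroup.ker_mk' _

lemma ker_beta_eq_inf (t : ℤ) :
    (beta C t).ker = stateN C t ⊓ ((evalHom C t).ker ⊓ stateN C (t + 1)) := by
  rw [beta, MonoidHom.ker_prod, MonoidHom.ker_prod, ker_sigma, ker_sigma]

/-- The first two components of `β^t` already cut out the kernel: what they leave is contained in
`C^{(t+1)-}C^{(t+1)+}`, so the third component imposes no further condition. -/
lemma ker_beta (t : ℤ) : (beta C t).ker = Cminus C t ⊔ Cplus C (t + 1) := by
  have hle : Cminus C t ⊔ Cplus C (t + 1) ≤ stateN C (t + 1) :=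
    sup_le_sup_right (Cminus_mono C (by lia)) _
  rw [ker_beta_eq_inf, ← inf_assoc, stateN_inf_ker_evalHom, inf_eq_left.mpr hle]

end

/-- The kernel of the branch homomorphism `β^t` equals the set product
`C^{t−}·C^{(t+1)+}`; consequently `B^t ≅ C/(C^{t−}C^{(t+1)+})`. -/
theorem statement5 (C : Subgroup (∀ t, A t)) (t : ℤ) :
    (((beta C t).ker : Set ↥C) = (Cminus C t : Set ↥C) * (Cplus C (t + 1) : Set ↥C)) ∧
    Nonempty (↥(Branch C t) ≃* (↥C ⧸ (Cminus C t ⊔ Cplus C (t + 1)))) := by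
  refine ⟨?_, ⟨?_⟩⟩
  · rw [ker_beta, Subgroup.mul_normal]
  · exact (QuotientGroup.quotientKerEquivRange (beta C t)).symm.trans
      (QuotientGroup.quotientMulEquivOfEq (ker_beta C t))

end GroupSystemPaper
end
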